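/- arXiv:math/0508227 — 3 statements merged into one kernel-verified Lean document; each statement's English description precedes it below -/
import Mathlib

section
/- Let α, β be real numbers such that α + β·x² ≠ 0 for all x in the interval [0, 1], and let n ≥ 1 be a natural number. Then n·α·∫₀¹ x^{n-1}/(α + βx²) dx = ((n+2)·α − n·β)·∫₀¹ x^{n+1}/(α + βx²) dx + (n+2)·β·∫₀¹ x^{n+3}/(α + βx²) dx. -/
/-!
Dividing `(α + βx²) g(x)` by `α + βx²` gives `α ∫ g/(α + βx²) + β ∫ g x²/(α + βx²) = ∫ g`.
Take for `g` the two terms of `(xⁿ(1 - x²))' = n xⁿ⁻¹ - (n + 2) xⁿ⁺¹` and subtract: the right-hand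
sides leave the increment of `xⁿ(1 - x²)`, which vanishes at both `0` and `1`.
-/

section QuadraticDenominator

open MeasureTheory

variable {𝕜 : Type*} [RCLike 𝕜] {α β : 𝕜} {a b : ℝ}

theorem intervalIntegrable_div_of_ne_zero {μ : Measure ℝ} {g q : ℝ → 𝕜}
    (hg : IntervalIntegrable g μ a b) (hq : ContinuousOn q (Set.uIcc a b))
    (hne : ∀ x ∈ Set.uIcc a b, q x ≠ 0) : IntervalIntegrable (fun x ↦ g x / q x) μ a b := by
  simp only [div_eq_mul_inv]
  exact hg.mul_continuousOn (hq.inv₀ hne)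

theorem integral_div_quadratic_add_integral_mul_sq_div_quadratic {μ : Measure ℝ}
    (hne : ∀ x ∈ Set.uIcc a b, α + β * (x : 𝕜) ^ 2 ≠ 0) {g : ℝ → 𝕜}
    (hg : IntervalIntegrable g μ a b) :
    α * (∫ x in a..b, g x / (α + β * (x : 𝕜) ^ 2) ∂μ) +
      β * (∫ x in a..b, g x * (x : 𝕜) ^ 2 / (α + β * (x : 𝕜) ^ 2) ∂μ) = ∫ x in a..b, g x ∂μ := by
  have hq : ContinuousOn (fun x : ℝ ↦ α + β * (x : 𝕜) ^ 2) (Set.uIcc a b) := by fun_prop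
  have hg_sq : IntervalIntegrable (fun x ↦ g x * (x : 𝕜) ^ 2) μ a b :=
    hg.mul_continuousOn (by fun_prop)
  have hg_div := intervalIntegrable_div_of_ne_zero hg hq hne
  have hg_sq_div := intervalIntegrable_div_of_ne_zero hg_sq hq hne
  rw [← intervalIntegral.integral_const_mul, ← intervalIntegral.integral_const_mul,
    ← intervalIntegral.integral_add (hg_div.const_mul α) (hg_sq_div.const_mul β)]
  refine intervalIntegral.integral_congr fun x hx ↦ ?_
  have hx_ne := hne x hx
  field_simp

theorem integral_ofReal_pow (a b : ℝ) (k : ℕ) :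
    ∫ x in a..b, (x : 𝕜) ^ k = ((b : 𝕜) ^ (k + 1) - (a : 𝕜) ^ (k + 1)) / (k + 1) := by
  simp_rw [← RCLike.ofReal_pow, RCLike.intervalIntegral_ofReal, integral_pow]
  simp

theorem succ_mul_integral_pow_div_quadratic_add
    (hne : ∀ x ∈ Set.uIcc a b, α + β * (x : 𝕜) ^ 2 ≠ 0) (k : ℕ) :
    (k + 1) * (α * (∫ x in a..b, (x : 𝕜) ^ k / (α + β * (x : 𝕜) ^ 2)) +
      β * (∫ x in a..b, (x : 𝕜) ^ (k + 2) / (α + β * (x : 𝕜) ^ 2))) =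
        (b : 𝕜) ^ (k + 1) - (a : 𝕜) ^ (k + 1) := by
  have hpow : IntervalIntegrable (fun x : ℝ ↦ (x : 𝕜) ^ k) volume a b :=
    Continuous.intervalIntegrable (by fun_prop) a b
  simp_rw [pow_add _ k 2]
  rw [integral_div_quadratic_add_integral_mul_sq_div_quadratic hne hpow, integral_ofReal_pow,
    mul_div_cancel₀ _ (Nat.cast_add_one_ne_zero k)]

theorem euler_arctan_integral_recurrence_general
    (hne : ∀ x ∈ Set.uIcc a b, α + β * (x : 𝕜) ^ 2 ≠ 0) {n : ℕ} (hn : 1 ≤ n) :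
    n * α * (∫ x in a..b, (x : 𝕜) ^ (n - 1) / (α + β * (x : 𝕜) ^ 2)) =
      ((n + 2) * α - n * β) * (∫ x in a..b, (x : 𝕜) ^ (n + 1) / (α + β * (x : 𝕜) ^ 2)) +
      (n + 2) * β * (∫ x in a..b, (x : 𝕜) ^ (n + 3) / (α + β * (x : 𝕜) ^ 2)) +
      ((b : 𝕜) ^ n * (1 - (b : 𝕜) ^ 2) - (a : 𝕜) ^ n * (1 - (a : 𝕜) ^ 2)) := by
  obtain ⟨m, rfl⟩ := Nat.exists_eq_add_of_le' hn
  have lower := succ_mul_integral_pow_div_quadratic_add hne m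
  have upper := succ_mul_integral_pow_div_quadratic_add hne (m + 2)
  push_cast [Nat.add_sub_cancel] at upper ⊢
  linear_combination lower - upper

end QuadraticDenominator

theorem euler_arctan_integral_recurrence (α β : ℝ)
    (hne : ∀ x ∈ Set.Icc (0 : ℝ) 1, α + β * x ^ 2 ≠ 0) (n : ℕ) (hn : 1 ≤ n) :
    (n : ℝ) * α * ∫ x in (0 : ℝ)..1, x ^ (n - 1) / (α + β * x ^ 2) =
      (((n : ℝ) + 2) * α - (n : ℝ) * β) * (∫ x in (0 : ℝ)..1, x ^ (n + 1) / (α + β * x ^ 2)) +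
      ((n : ℝ) + 2) * β * ∫ x in (0 : ℝ)..1, x ^ (n + 3) / (α + β * x ^ 2) := by
  rw [← Set.uIcc_of_le zero_le_one] at hne
  simpa [Nat.one_le_iff_ne_zero.mp hn] using euler_arctan_integral_recurrence_general hne hn
end

section
/- Let α, γ be real numbers with α > γ > 0. Consider the generalized continued fraction with initial term b₀ = α − γ, partial numerators a_k = −(2k−1)²·α·γ, and partial denominators b_k = (2k+1)·α + (2k−1)·γ for all k ≥ 1. Then the sequence of convergents h_n/k_n converges to −γ + 2·√(αγ) / log((√α + √γ)/(√α − √γ)). -/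
open Filter Topology

/-!
The recurrence `y (n + 2) = (p (n + 1) + q n) * y (n + 1) - p n * q n * y n` factors as
`y (n + 2) - p (n + 1) * y (n + 1) = q n * (y (n + 1) - p n * y n)`. Hence the defect
`y (n + 1) - p n * y n` is a constant times `∏ i < n, q i`, and dividing by `∏ i ≤ n, p i` shows
that `y n / ∏ i < n, p i` is an affine function of a partial sum of the series
`∑ (∏ i < j, q i) / ∏ i ≤ j, p i`. The ratio of two solutions, in particular a convergent, is
therefore a fractional linear function of that partial sum. For `p n = (2 * n + 1) * α` and
`q n = (2 * n + 1) * γ` the series is `∑ γ ^ j / ((2 * j + 1) * α ^ (j + 1))`, which is, up to a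
constant factor, the expansion of `log ((1 + x) / (1 - x))` at `x = √γ / √α`.
-/

/-- The three-term recurrence of Euler's continued fraction, satisfied by the numerators and by the
denominators of the convergents when the partial numerators are `-(p n * q n)` and the partial
denominators `p (n + 1) + q n`. The index is shifted by one from the usual convention: `y 0` and
`y 1` are the values at the indices `-1` and `0`. -/
def IsEulerRecurrence {R : Type*} [CommRing R] (p q y : ℕ → R) : Prop :=
  ∀ n, y (n + 2) = (p (n + 1) + q n) * y (n + 1) - p n * q n * y n

/-- The `j`-th term of the series equivalent to Euler's continued fraction: multiplied by
`∏ i < n, p i`, its `n`-th partial sum solves `IsEulerRecurrence p q`. -/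
def eulerTerm {K : Type*} [Field K] (p q : ℕ → K) (j : ℕ) : K :=
  (∏ i ∈ Finset.range j, q i) / ∏ i ∈ Finset.range (j + 1), p i

theorem eulerTerm_mul_const {K : Type*} [Field K] {d : ℕ → K} (hd : ∀ n, d n ≠ 0) (α γ : K)
    (j : ℕ) :
    eulerTerm (fun n => d n * α) (fun n => d n * γ) j = γ ^ j / (d j * α ^ (j + 1)) := by
  have hprod : ∏ i ∈ Finset.range j, d i ≠ 0 := Finset.prod_ne_zero_iff.2 fun i _ => hd i
  simp only [eulerTerm, Finset.prod_mul_distrib, Finset.prod_const, Finset.card_range]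
  rw [Finset.prod_range_succ, mul_assoc, mul_div_mul_left _ _ hprod]

namespace IsEulerRecurrence

theorem succ_sub_mul {R : Type*} [CommRing R] {p q y : ℕ → R} (hy : IsEulerRecurrence p q y)
    (n : ℕ) :
    y (n + 1) - p n * y n = (y 1 - p 0 * y 0) * ∏ i ∈ Finset.range n, q i := by
  induction n with
  | zero => simp
  | succ n ih =>
    calc y (n + 2) - p (n + 1) * y (n + 1)
        = (y (n + 1) - p n * y n) * q n := by rw [hy n]; ring
      _ = (y 1 - p 0 * y 0) * ∏ i ∈ Finset.range (n + 1), q i := by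
        rw [ih, Finset.prod_range_succ, mul_assoc]

variable {K : Type*} [Field K] {p q y z : ℕ → K}

theorem eq_prod_mul_add_sum_eulerTerm (hp : ∀ n, p n ≠ 0) (hy : IsEulerRecurrence p q y) (n : ℕ) :
    y n = (∏ i ∈ Finset.range n, p i) *
      (y 0 + (y 1 - p 0 * y 0) * ∑ j ∈ Finset.range n, eulerTerm p q j) := by
  induction n with
  | zero => simp
  | succ n ih =>
    have hprod : ∏ i ∈ Finset.range (n + 1), p i ≠ 0 :=
      Finset.prod_ne_zero_iff.2 fun i _ => hp i
    have hterm : ∏ i ∈ Finset.range n, q i =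
        (∏ i ∈ Finset.range (n + 1), p i) * eulerTerm p q n :=
      (mul_div_cancel₀ _ hprod).symm
    have hsucc := hy.succ_sub_mul n
    rw [hterm] at hsucc
    rw [Finset.sum_range_succ]
    rw [Finset.prod_range_succ] at hsucc ⊢
    linear_combination hsucc + p n * ih

theorem div_eq (hp : ∀ n, p n ≠ 0) (hy : IsEulerRecurrence p q y) (hz : IsEulerRecurrence p q z)
    (n : ℕ) :
    y n / z n = (y 0 + (y 1 - p 0 * y 0) * ∑ j ∈ Finset.range n, eulerTerm p q j) /
      (z 0 + (z 1 - p 0 * z 0) * ∑ j ∈ Finset.range n, eulerTerm p q j) := by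
  rw [hy.eq_prod_mul_add_sum_eulerTerm hp n, hz.eq_prod_mul_add_sum_eulerTerm hp n,
    mul_div_mul_left _ _ (Finset.prod_ne_zero_iff.2 fun i _ => hp i)]

theorem tendsto_div [TopologicalSpace K] [IsTopologicalDivisionRing K] {S : K}
    (hp : ∀ n, p n ≠ 0) (hy : IsEulerRecurrence p q y) (hz : IsEulerRecurrence p q z)
    (hS : Tendsto (fun n => ∑ j ∈ Finset.range n, eulerTerm p q j) atTop (𝓝 S))
    (hzS : z 0 + (z 1 - p 0 * z 0) * S ≠ 0) :
    Tendsto (fun n => y n / z n) atTop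
      (𝓝 ((y 0 + (y 1 - p 0 * y 0) * S) / (z 0 + (z 1 - p 0 * z 0) * S))) := by
  simp_rw [hy.div_eq hp hz]
  exact ((hS.const_mul _).const_add _).div ((hS.const_mul _).const_add _) hzS

theorem tendsto_div_of_convergents [TopologicalSpace K] [IsTopologicalDivisionRing K] {c S : K}
    (hp : ∀ n, p n ≠ 0) (hy : IsEulerRecurrence p q y) (hz : IsEulerRecurrence p q z)
    (hy0 : y 0 = 1) (hy1 : y 1 = p 0 - c) (hz0 : z 0 = 0) (hz1 : z 1 = 1)
    (hS : Tendsto (fun n => ∑ j ∈ Finset.range n, eulerTerm p q j) atTop (𝓝 S)) (hS0 : S ≠ 0) :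
    Tendsto (fun n => y n / z n) atTop (𝓝 (-c + S⁻¹)) := by
  have hlim := hy.tendsto_div hp hz hS (by simpa [hz0, hz1] using hS0)
  have hvalue : (y 0 + (y 1 - p 0 * y 0) * S) / (z 0 + (z 1 - p 0 * z 0) * S) = -c + S⁻¹ := by
    simp only [hy0, hy1, hz0, hz1, mul_one, mul_zero, sub_zero, zero_add, one_mul,
      sub_sub_cancel_left]
    rw [add_div, one_div, mul_div_cancel_right₀ _ hS0, add_comm]
  rwa [hvalue] at hlim

end IsEulerRecurrence

theorem hasSum_log_add_div_sub {s t : ℝ} (hts : |t| < s) :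
    HasSum (fun j : ℕ => 2 * (1 / (2 * (j : ℝ) + 1)) * (t / s) ^ (2 * j + 1))
      (Real.log ((s + t) / (s - t))) := by
  have hs : 0 < s := (abs_nonneg t).trans_lt hts
  obtain ⟨hadd, hsub⟩ : 0 < s + t ∧ 0 < s - t := by constructor <;> linarith [abs_lt.1 hts]
  have hlog : Real.log ((s + t) / (s - t)) = Real.log (1 + t / s) - Real.log (1 - t / s) := by
    rw [one_add_div hs.ne', one_sub_div hs.ne', ← Real.log_div (by positivity) (by positivity),
      div_div_div_cancel_right₀ hs.ne']
  rw [hlog]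
  apply Real.hasSum_log_sub_log_of_abs_lt_one
  rwa [abs_div, abs_of_pos hs, div_lt_one hs]

theorem log_add_div_sub_pos {s t : ℝ} (ht : 0 < t) (hts : t < s) :
    0 < Real.log ((s + t) / (s - t)) :=
  Real.log_pos ((one_lt_div (sub_pos.2 hts)).2 (by linarith))

theorem hasSum_pow_div_odd_mul_pow {α γ : ℝ} (hγ : 0 < γ) (hαγ : γ < α) :
    HasSum (fun j : ℕ => γ ^ j / ((2 * (j : ℝ) + 1) * α ^ (j + 1)))
      (Real.log ((√α + √γ) / (√α - √γ)) / (2 * √(α * γ))) := by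
  have hα : 0 < α := hγ.trans hαγ
  have ht : 0 < √γ := Real.sqrt_pos.2 hγ
  have hlog := hasSum_log_add_div_sub (s := √α) (t := √γ)
    (by rw [abs_of_pos ht]; exact Real.sqrt_lt_sqrt hγ.le hαγ)
  rw [Real.sqrt_mul hα.le]
  refine (hlog.div_const (2 * (√α * √γ))).congr_fun fun j => ?_
  conv_lhs => rw [← Real.sq_sqrt hα.le, ← Real.sq_sqrt hγ.le, ← pow_mul, ← pow_mul]
  rw [div_pow]
  field_simp
  ring

theorem euler_cf_log_general
    (α γ : ℝ) (a b num den : ℕ → ℝ)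
    (hγ : 0 < γ) (hαγ : γ < α)
    (hb0 : b 0 = α - γ)
    (ha : ∀ k : ℕ, 1 ≤ k → a k = -((2 * (k : ℝ) - 1) ^ 2 * α * γ))
    (hb : ∀ k : ℕ, 1 ≤ k → b k = (2 * (k : ℝ) + 1) * α + (2 * (k : ℝ) - 1) * γ)
    (hnum0 : num 0 = 1) (hnum1 : num 1 = b 0)
    (hden0 : den 0 = 0) (hden1 : den 1 = 1)
    (hnum : ∀ n : ℕ, num (n + 2) = b (n + 1) * num (n + 1) + a (n + 1) * num n)
    (hden : ∀ n : ℕ, den (n + 2) = b (n + 1) * den (n + 1) + a (n + 1) * den n) :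
    Tendsto (fun n : ℕ => num (n + 1) / den (n + 1)) atTop
      (𝓝 (-γ + 2 * Real.sqrt (α * γ) / Real.log ((Real.sqrt α + Real.sqrt γ) / (Real.sqrt α - Real.sqrt γ)))) := by
  have hα : 0 < α := hγ.trans hαγ
  let d : ℕ → ℝ := fun n => 2 * n + 1
  have hd (n : ℕ) : d n ≠ 0 := by positivity
  have hrec {y : ℕ → ℝ} (hy : ∀ n, y (n + 2) = b (n + 1) * y (n + 1) + a (n + 1) * y n) :
      IsEulerRecurrence (fun n => d n * α) (fun n => d n * γ) y := fun n => by
    rw [hy, ha _ n.succ_pos, hb _ n.succ_pos]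
    push_cast [d]
    ring
  have hsum := (hasSum_pow_div_odd_mul_pow hγ hαγ).congr_fun (eulerTerm_mul_const hd α γ)
  have hS : Real.log ((√α + √γ) / (√α - √γ)) / (2 * √(α * γ)) ≠ 0 :=
    (div_pos (log_add_div_sub_pos (Real.sqrt_pos.2 hγ) (Real.sqrt_lt_sqrt hγ.le hαγ))
      (by positivity)).ne'
  rw [← inv_div]
  exact (tendsto_add_atTop_iff_nat 1).2 <|
    (hrec hnum).tendsto_div_of_convergents (fun n => mul_ne_zero (hd n) hα.ne') (hrec hden)
      hnum0 (by simp [hnum1, hb0, d]) hden0 hden1 hsum.tendsto_sum_nat hS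
end

section
/- Consider the generalized continued fraction with initial term b₀ = 3, partial numerators a_k = −4·(2k−1)², and partial denominators b_k = 10k + 3 for all k ≥ 1. Then the sequence of convergents h_n/k_n converges to −1 + 4/log 3. -/
open Filter Topology

/-!
If `u` satisfies the three-term recurrence `y (n + 2) = b (n + 1) * y (n + 1) + a (n + 1) * y n` of
the continuants, reduction of order produces a second solution `u n * ∑ k < n, t k`, where
`u (n + 2) * t (n + 1) = -a (n + 1) * (u n * t n)`. Up to the common factor `u n`, numerators and
denominators of the convergents are therefore affine functions of the partial sums of `∑ t k`, and
the limit of the convergents is read off from the sum of that series.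

For the partial numerators `-(x * (2 * k - 1)) ^ 2` and the partial denominators
`(2 * k + 1) * x ^ 2 + (2 * k - 1)` one may take `u n = x ^ (2 * n - 2) * (2 * n - 1)‼`, and the
series is `∑ x⁻¹ ^ (2 * k) / (2 * k + 1) = x * artanh x⁻¹`. At `x = 2` this gives `log 3`.
-/

/-- The three-term recurrence satisfied by the numerators and by the denominators of the
convergents of the continued fraction with partial numerators `a` and partial denominators `b`.
The index is shifted by one against the convergents: `y 0` is the entry of index `-1`. -/
def IsContinuantSeq {R : Type*} [Add R] [Mul R] (a b y : ℕ → R) : Prop :=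
  ∀ n, y (n + 2) = b (n + 1) * y (n + 1) + a (n + 1) * y n

namespace IsContinuantSeq

theorem eq_of_initial {R : Type*} [Add R] [Mul R] {a b y z : ℕ → R} (hy : IsContinuantSeq a b y)
    (hz : IsContinuantSeq a b z) (h0 : y 0 = z 0) (h1 : y 1 = z 1) (n : ℕ) : y n = z n := by
  induction n using Nat.twoStepInduction with
  | zero => exact h0
  | one => exact h1
  | more n ih ih_succ => rw [hy, hz, ih, ih_succ]

theorem const_mul_add_const_mul {R : Type*} [CommSemiring R] {a b y z : ℕ → R}
    (hy : IsContinuantSeq a b y) (hz : IsContinuantSeq a b z) (p q : R) :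
    IsContinuantSeq a b fun n ↦ p * y n + q * z n := fun n ↦ by
  simp only [hy n, hz n]
  ring

theorem mul_sum_range {R : Type*} [CommRing R] {a b u t : ℕ → R} (hu : IsContinuantSeq a b u)
    (ht : ∀ n, u (n + 2) * t (n + 1) = -a (n + 1) * (u n * t n)) :
    IsContinuantSeq a b fun n ↦ u n * ∑ k ∈ Finset.range n, t k := fun n ↦ by
  simp only [Finset.sum_range_succ]
  linear_combination (∑ k ∈ Finset.range n, t k + t n) * hu n + ht n

section Convergents

variable {K : Type*} [Field K] {a b u t num den : ℕ → K}

theorem den_eq_mul_sum_range (hden : IsContinuantSeq a b den) (hu : IsContinuantSeq a b u)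
    (ht : ∀ n, u (n + 2) * t (n + 1) = -a (n + 1) * (u n * t n))
    (hden0 : den 0 = 0) (hden1 : den 1 = 1) (hu1 : u 1 = 1) (ht0 : t 0 = 1) (n : ℕ) :
    den n = u n * ∑ k ∈ Finset.range n, t k :=
  hden.eq_of_initial (hu.mul_sum_range ht) (by simp [hden0]) (by simp [hden1, hu1, ht0]) n

theorem num_eq_add_den (hnum : IsContinuantSeq a b num) (hden : IsContinuantSeq a b den)
    (hu : IsContinuantSeq a b u) (hnum0 : num 0 = 1) (hnum1 : num 1 = b 0)
    (hden0 : den 0 = 0) (hden1 : den 1 = 1) (hu0 : u 0 ≠ 0) (hu1 : u 1 = 1) (n : ℕ) :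
    num n = (u 0)⁻¹ * u n + (b 0 - (u 0)⁻¹) * den n :=
  hnum.eq_of_initial (hu.const_mul_add_const_mul hden _ _) (by simp [hnum0, hden0, hu0])
    (by simp [hnum1, hden1, hu1]) n

theorem tendsto_num_div_den [TopologicalSpace K] [IsTopologicalDivisionRing K] {s : K}
    (hnum : IsContinuantSeq a b num) (hden : IsContinuantSeq a b den) (hu : IsContinuantSeq a b u)
    (ht : ∀ n, u (n + 2) * t (n + 1) = -a (n + 1) * (u n * t n))
    (hnum0 : num 0 = 1) (hnum1 : num 1 = b 0) (hden0 : den 0 = 0) (hden1 : den 1 = 1)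
    (hu_ne : ∀ n, u n ≠ 0) (hu1 : u 1 = 1) (ht0 : t 0 = 1)
    (hs : Tendsto (fun n ↦ ∑ k ∈ Finset.range n, t k) atTop (𝓝 s)) (hs0 : s ≠ 0) :
    Tendsto (fun n ↦ num n / den n) atTop (𝓝 (b 0 - (u 0)⁻¹ + (u 0)⁻¹ / s)) := by
  have h_limit : ((u 0)⁻¹ + (b 0 - (u 0)⁻¹) * s) / s = b 0 - (u 0)⁻¹ + (u 0)⁻¹ / s := by
    rw [add_div, mul_div_cancel_right₀ _ hs0, add_comm]
  rw [← h_limit]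
  refine (((hs.const_mul _).const_add _).div hs hs0).congr fun n ↦ ?_
  rw [hnum.num_eq_add_den hden hu hnum0 hnum1 hden0 hden1 (hu_ne 0) hu1,
    hden.den_eq_mul_sum_range hu ht hden0 hden1 hu1 ht0, Pi.div_apply,
    ← mul_div_mul_left _ (∑ k ∈ Finset.range n, t k) (hu_ne n)]
  ring

end Convergents

end IsContinuantSeq

section ArtanhContinuant

variable {K : Type*} [Field K]

/-- The solution `x ^ (2 * n - 2) * (2 * n - 1)‼` of the recurrence for the continued fraction of
`x / artanh x⁻¹`, by which reduction of order is carried out. Dividing by `x ^ 2` makes the entry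
at `n = 0` equal to `x ^ (-2)`. -/
def artanhContinuant (x : K) (n : ℕ) : K :=
  x ^ (2 * n) / x ^ 2 * ∏ k ∈ Finset.range n, (2 * (k : K) + 1)

theorem artanhContinuant_zero (x : K) : artanhContinuant x 0 = (x ^ 2)⁻¹ := by
  simp [artanhContinuant]

theorem artanhContinuant_one {x : K} (hx : x ≠ 0) : artanhContinuant x 1 = 1 := by
  simp [artanhContinuant, hx]

theorem artanhContinuant_succ (x : K) (n : ℕ) :
    artanhContinuant x (n + 1) = (2 * n + 1) * x ^ 2 * artanhContinuant x n := by
  simp only [artanhContinuant, Finset.prod_range_succ]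
  ring

theorem isContinuantSeq_artanhContinuant {a b : ℕ → K} {x : K}
    (ha : ∀ n : ℕ, a (n + 1) = -(x * (2 * n + 1)) ^ 2)
    (hb : ∀ n : ℕ, b (n + 1) = (2 * n + 3) * x ^ 2 + (2 * n + 1)) :
    IsContinuantSeq a b (artanhContinuant x) := fun n ↦ by
  rw [ha, hb, artanhContinuant_succ, artanhContinuant_succ]
  push_cast
  ring

variable [CharZero K]

theorem two_mul_natCast_add_one_ne_zero (n : ℕ) : 2 * (n : K) + 1 ≠ 0 := by
  exact_mod_cast (2 * n).succ_ne_zero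

theorem artanhContinuant_ne_zero {x : K} (hx : x ≠ 0) (n : ℕ) : artanhContinuant x n ≠ 0 :=
  mul_ne_zero (div_ne_zero (pow_ne_zero _ hx) (pow_ne_zero _ hx))
    (Finset.prod_ne_zero_iff.2 fun k _ ↦ two_mul_natCast_add_one_ne_zero k)

theorem artanhContinuant_add_two_mul {x : K} (hx : x ≠ 0) (n : ℕ) :
    artanhContinuant x (n + 2) * (x⁻¹ ^ (2 * (n + 1)) / (2 * (n + 1 : ℕ) + 1)) =
      (x * (2 * n + 1)) ^ 2 * (artanhContinuant x n * (x⁻¹ ^ (2 * n) / (2 * n + 1))) := by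
  have hn := two_mul_natCast_add_one_ne_zero (K := K) n
  have hn_succ := two_mul_natCast_add_one_ne_zero (K := K) (n + 1)
  rw [artanhContinuant_succ, artanhContinuant_succ, mul_add_one, pow_add]
  field_simp

end ArtanhContinuant

theorem hasSum_artanh {x : ℝ} (hx : |x| < 1) :
    HasSum (fun k : ℕ ↦ x ^ (2 * k + 1) / (2 * k + 1)) (Real.artanh x) := by
  obtain ⟨hx_neg, hx_pos⟩ := abs_lt.1 hx
  rw [Real.artanh_eq_half_log ⟨hx_neg.le, hx_pos.le⟩,
    Real.log_div (by linarith) (by linarith)]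
  refine ((Real.hasSum_log_sub_log_of_abs_lt_one hx).mul_left (1 / 2)).congr_fun fun k ↦ ?_
  ring

theorem hasSum_artanh_div_self {x : ℝ} (hx : |x| < 1) (hx0 : x ≠ 0) :
    HasSum (fun k : ℕ ↦ x ^ (2 * k) / (2 * k + 1)) (Real.artanh x / x) := by
  refine ((hasSum_artanh hx).div_const x).congr_fun fun k ↦ ?_
  rw [pow_succ, div_right_comm, mul_div_cancel_right₀ _ hx0]

theorem artanh_ne_zero {x : ℝ} (hx : |x| < 1) (hx0 : x ≠ 0) : Real.artanh x ≠ 0 := by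
  obtain ⟨hx_neg, hx_pos⟩ := abs_lt.1 hx
  simp [Real.artanh_eq_zero_iff, hx0, hx_neg, hx_pos]

theorem artanh_inv_two : Real.artanh 2⁻¹ = Real.log 3 / 2 := by
  have h_ratio : ((1 + 2⁻¹) / (1 - 2⁻¹) : ℝ) = 3 := by norm_num
  rw [Real.artanh_eq_half_log ⟨by norm_num, by norm_num⟩, h_ratio]
  ring

theorem euler_cf_log_three_general {a b num den : ℕ → ℝ} {x : ℝ} (hx : 1 < |x|)
    (ha : ∀ n : ℕ, a (n + 1) = -(x * (2 * n + 1)) ^ 2)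
    (hb : ∀ n : ℕ, b (n + 1) = (2 * n + 3) * x ^ 2 + (2 * n + 1))
    (hnum0 : num 0 = 1) (hnum1 : num 1 = b 0) (hden0 : den 0 = 0) (hden1 : den 1 = 1)
    (hnum : IsContinuantSeq a b num) (hden : IsContinuantSeq a b den) :
    Tendsto (fun n ↦ num (n + 1) / den (n + 1)) atTop
      (𝓝 (b 0 - x ^ 2 + x / Real.artanh x⁻¹)) := by
  have hx0 : x ≠ 0 := abs_pos.1 (one_pos.trans hx)
  have hx_inv : |x⁻¹| < 1 := by simpa only [abs_inv] using inv_lt_one_of_one_lt₀ hx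
  have h_lim := hnum.tendsto_num_div_den hden (isContinuantSeq_artanhContinuant ha hb)
    (fun n ↦ by rw [ha, neg_neg, artanhContinuant_add_two_mul hx0]) hnum0 hnum1 hden0 hden1
    (artanhContinuant_ne_zero hx0) (artanhContinuant_one hx0) (by simp)
    (hasSum_artanh_div_self hx_inv (inv_ne_zero hx0)).tendsto_sum_nat
    (div_ne_zero (artanh_ne_zero hx_inv (inv_ne_zero hx0)) (inv_ne_zero hx0))
  have h_value : b 0 - (artanhContinuant x 0)⁻¹ +
      (artanhContinuant x 0)⁻¹ / (Real.artanh x⁻¹ / x⁻¹) =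
        b 0 - x ^ 2 + x / Real.artanh x⁻¹ := by
    rw [artanhContinuant_zero, inv_inv, div_div_eq_mul_div, sq, mul_inv_cancel_right₀ hx0]
  exact h_value ▸ h_lim.comp (tendsto_add_atTop_nat 1)

theorem euler_cf_log_three
    (a b num den : ℕ → ℝ)
    (hb0 : b 0 = 3)
    (ha : ∀ k : ℕ, 1 ≤ k → a k = -(4 * (2 * (k : ℝ) - 1) ^ 2))
    (hb : ∀ k : ℕ, 1 ≤ k → b k = 10 * (k : ℝ) + 3)
    (hnum0 : num 0 = 1) (hnum1 : num 1 = b 0)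
    (hden0 : den 0 = 0) (hden1 : den 1 = 1)
    (hnum : ∀ n : ℕ, num (n + 2) = b (n + 1) * num (n + 1) + a (n + 1) * num n)
    (hden : ∀ n : ℕ, den (n + 2) = b (n + 1) * den (n + 1) + a (n + 1) * den n) :
    Tendsto (fun n : ℕ => num (n + 1) / den (n + 1)) atTop
      (𝓝 (-1 + 4 / Real.log 3)) := by
  have ha_succ (n : ℕ) : a (n + 1) = -(2 * (2 * n + 1)) ^ 2 := by
    rw [ha _ n.succ_pos]; push_cast; ring
  have hb_succ (n : ℕ) : b (n + 1) = (2 * n + 3) * 2 ^ 2 + (2 * n + 1) := by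
    rw [hb _ n.succ_pos]; push_cast; ring
  have h_value : b 0 - 2 ^ 2 + 2 / Real.artanh 2⁻¹ = -1 + 4 / Real.log 3 := by
    rw [hb0, artanh_inv_two, div_div_eq_mul_div]; norm_num
  exact h_value ▸ euler_cf_log_three_general (by norm_num) ha_succ hb_succ
    hnum0 hnum1 hden0 hden1 hnum hden
end
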